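/- arXiv:2208.01628 — 2 statements merged into one kernel-verified Lean document; each statement's English description precedes it below -/
import Mathlib

section
/- Let ω = e^{2πi/3}, Λ = ℤω ⊕ ℤ, θ as below, z(k) := √3·k/(4πi), F_k(z) := e^{(i/2)(z−conj(z))k}·θ(z−z(k))/θ(z) for z ∉ Λ, and c(k) := 2πi·θ(z(k))/θ′(0). Then for every k ∈ ℂ the function F_k is locally Lebesgue-integrable on ℂ, and for every smooth compactly supported χ : ℂ → ℂ one has ∫_ℂ F_k(z)·(2i·∂_{z̄}χ(z) + k·χ(z)) dm(z) = c(k)·∑_{γ∈Λ} χ(γ), where ∂_{z̄} = (∂_x + i∂_y)/2, dm is Lebesgue measure on ℂ ≅ ℝ², and the sum on the right has finitely many nonzero terms. Equivalently, in the sense of distributions, (2D_{z̄} + k)F_k = c(k)·∑_{γ∈Λ} δ_γ with 2D_{z̄} = −2i∂_{z̄}. -/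
open Complex MeasureTheory

noncomputable section

/-- `ω = e^{2πi/3}`. -/
def ω : ℂ := Complex.exp (2 * (Real.pi : ℂ) * Complex.I / 3)

/-- The Jacobi theta function `θ₁(z|ω)`. -/
def θ (z : ℂ) : ℂ :=
  -∑' n : ℤ, Complex.exp ((Real.pi : ℂ) * Complex.I * ((n : ℂ) + 1/2)^2 * ω
      + 2 * (Real.pi : ℂ) * Complex.I * ((n : ℂ) + 1/2) * (z + 1/2))

/-- `z(k) = √3 k/(4πi)`. -/
def zmap (k : ℂ) : ℂ := (Real.sqrt 3 : ℂ) * k / (4 * (Real.pi : ℂ) * Complex.I)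

/-- `F_k(z) = e^{(i/2)(z - z̄)k} θ(z - z(k))/θ(z)`. -/
def F (k z : ℂ) : ℂ :=
  Complex.exp ((Complex.I / 2) * (z - (starRingEnd ℂ) z) * k) * θ (z - zmap k) / θ z

/-- `c(k) = 2πi θ(z(k))/θ'(0)`. -/
def c (k : ℂ) : ℂ := 2 * (Real.pi : ℂ) * Complex.I * θ (zmap k) / deriv θ 0

/-- The antiholomorphic Wirtinger derivative `∂_{z̄} χ = (∂_x χ + i ∂_y χ)/2`. -/
def dbar (χ : ℂ → ℂ) (z : ℂ) : ℂ :=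
  (fderiv ℝ χ z 1 + Complex.I * fderiv ℝ χ z Complex.I) / 2

/-!
The exponential factor of `F_k` is `e^{-k Im z}`, and `e^{-k Im z}(2i ∂_{z̄}χ + kχ)` equals
`2i ∂_{z̄}(e^{-k Im z} χ)`, so the integral is that of the meromorphic function
`θ(z - z(k))/θ(z)` against `2i ∂_{z̄}(e^{-k Im z} χ)`. Subtracting the principal parts and
applying the Cauchy–Pompeiu formula `∫ ∂_{z̄}ψ/(z - a) = -π ψ(a)`, it becomes a sum over the
poles, all of which are simple and lie in `Λ`. Because `F_k` is `Λ`-periodic, each pole carries the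
residue at `0`, divided by the value of `e^{-k Im z}` there, so that every lattice point contributes
the same multiple `c(k)` of `χ`.

The zeros of `θ` are located from the sine series `θ(z) = 2 ∑ (-1)ⁿ e^{πi(n+1/2)²ω} sin((2n+1)πz)`:
its first term dominates the others on the strip `|Im z| ≤ Im ω / 2`, whose translates by `ℤω`
cover the plane.
-/

open Set Filter
open scoped Real Topology

section Wirtinger

variable {f g ψ : ℂ → ℂ} {z : ℂ}

lemma dbar_mul (hf : DifferentiableAt ℝ f z) (hg : DifferentiableAt ℝ g z) :
    dbar (fun w ↦ f w * g w) z = f z * dbar g z + dbar f z * g z := by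
  simp only [dbar, fderiv_fun_mul hf hg, add_apply, smul_apply, smul_eq_mul]
  ring

lemma dbar_eq_zero_of_differentiableAt (hf : DifferentiableAt ℂ f z) : dbar f z = 0 := by
  have fderiv_I : fderiv ℂ f z I = I * fderiv ℂ f z 1 := by
    rw [← smul_eq_mul, ← map_smul, smul_eq_mul, mul_one]
  rw [dbar, (hf.hasFDerivAt.restrictScalars ℝ).fderiv]
  simp only [ContinuousLinearMap.coe_restrictScalars', fderiv_I, ← mul_assoc, I_mul_I]
  ring

lemma dbar_comp_add_right (f : ℂ → ℂ) (a z : ℂ) : dbar (fun w ↦ f (w + a)) z = dbar f (z + a) := by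
  simp only [dbar, fderiv_comp_add_right]

lemma dbar_eq_zero_of_notMem_tsupport (hz : z ∉ tsupport f) : dbar f z = 0 := by
  have : fderiv ℝ f z = 0 := Function.notMem_support.1 fun h ↦ hz (support_fderiv_subset ℝ h)
  simp [dbar, this]

lemma hasCompactSupport_dbar (hf : HasCompactSupport f) : HasCompactSupport (dbar f) :=
  HasCompactSupport.intro' hf.isCompact (isClosed_tsupport f) fun _ ↦
    dbar_eq_zero_of_notMem_tsupport

lemma continuous_dbar (hf : ContDiff ℝ 1 f) : Continuous (dbar f) := by
  have := hf.continuous_fderiv one_ne_zero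
  unfold dbar
  fun_prop

lemma fderiv_apply_add_I_mul_fderiv_apply_I_mul (f : ℂ → ℂ) (z v : ℂ) :
    fderiv ℝ f z v + I * fderiv ℝ f z (I * v) = 2 * (starRingEnd ℂ) v * dbar f z := by
  have expand (w : ℂ) : fderiv ℝ f z w = w.re * fderiv ℝ f z 1 + w.im * fderiv ℝ f z I := by
    conv_lhs => rw [show w = w.re • (1 : ℂ) + w.im • I by simp [re_add_im]]
    rw [map_add, map_smul, map_smul, real_smul, real_smul]
  have conj_eq : (starRingEnd ℂ) v = v.re - v.im * I := by apply Complex.ext <;> simp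
  simp only [expand v, expand (I * v), conj_eq, dbar, I_mul_re, I_mul_im, ofReal_neg]
  linear_combination v.im * fderiv ℝ f z I * I_sq

lemma integral_dbar_eq_zero (hf : ContDiff ℝ 1 f) (hfc : HasCompactSupport f) :
    ∫ z, dbar f z = 0 := by
  have hcont := hf.continuous_fderiv one_ne_zero
  have integrable_fderiv (v : ℂ) : Integrable fun z ↦ fderiv ℝ f z v :=
    (hcont.clm_apply continuous_const).integrable_of_hasCompactSupport (hfc.fderiv_apply ℝ v)
  have integral_fderiv (v : ℂ) : ∫ z, fderiv ℝ f z v = 0 := by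
    simpa using integral_mul_fderiv_eq_neg_fderiv_mul_of_integrable (μ := volume)
      (f := fun _ : ℂ ↦ (1 : ℂ)) (g := f) (v := v) (by simp) (by simpa using integrable_fderiv v)
      (by simpa using hf.continuous.integrable_of_hasCompactSupport hfc) (by fun_prop)
      (fun z _ ↦ hf.differentiable one_ne_zero z)
  simp only [dbar]
  rw [integral_div, integral_add (integrable_fderiv 1) ((integrable_fderiv I).const_mul I),
    integral_const_mul, integral_fderiv, integral_fderiv]
  simp

end Wirtinger

section CauchyPompeiu

lemma integral_Ioi_fderiv_smul {E G : Type*} [NormedAddCommGroup E] [NormedSpace ℝ E]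
    [NormedAddCommGroup G] [NormedSpace ℝ G] [CompleteSpace G] {f : E → G} (hf : ContDiff ℝ 1 f)
    (hfc : HasCompactSupport f) {v : E} (hv : v ≠ 0) :
    ∫ r in Ioi (0 : ℝ), fderiv ℝ f (r • v) v = -f 0 := by
  have hderiv (r : ℝ) : HasDerivAt (fun r : ℝ ↦ f (r • v)) (fderiv ℝ f (r • v) v) r := by
    have hv : HasDerivAt (fun r : ℝ ↦ r • v) v r := by
      simpa using (hasDerivAt_id r).smul_const v
    exact (hf.differentiable one_ne_zero (r • v)).hasFDerivAt.comp_hasDerivAt r hv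
  have hcomp : ContDiff ℝ 1 fun r : ℝ ↦ f (r • v) := by fun_prop
  simpa [funext fun r ↦ (hderiv r).deriv] using
    (hfc.comp_isClosedEmbedding (isClosedEmbedding_smul_left hv)).integral_Ioi_deriv_eq hcomp 0

lemma integral_fderiv_circleMap {G : Type*} [NormedAddCommGroup G] [NormedSpace ℝ G]
    [CompleteSpace G] {f : ℂ → G} (hf : ContDiff ℝ 1 f) (c : ℂ) (R a : ℝ) :
    ∫ t in a..a + 2 * π, fderiv ℝ f (circleMap c R t) (circleMap 0 R t * I) = 0 := by
  have := hf.continuous_fderiv one_ne_zero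
  have hderiv (t : ℝ) : HasDerivAt (fun t ↦ f (circleMap c R t))
      (fderiv ℝ f (circleMap c R t) (circleMap 0 R t * I)) t :=
    (hf.differentiable one_ne_zero _).hasFDerivAt.comp_hasDerivAt t (hasDerivAt_circleMap c R t)
  rw [intervalIntegral.integral_eq_sub_of_hasDerivAt (fun t _ ↦ hderiv t)
    (Continuous.intervalIntegrable (by fun_prop) _ _), periodic_circleMap c R a, sub_self]

lemma integrableOn_polarCoord_target_clm_apply {G : Type*} [NormedAddCommGroup G] [NormedSpace ℝ G]
    {L : ℂ → ℂ →L[ℝ] G} (hL : Continuous L) (hLc : HasCompactSupport L) {v : ℝ → ℂ}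
    (hv : Continuous v) :
    IntegrableOn (fun p ↦ L (circleMap 0 p.1 p.2) (v p.2)) polarCoord.target := by
  obtain ⟨R, hR⟩ := hLc.isCompact.isBounded.subset_closedBall 0
  have hbox : IntegrableOn (fun p : ℝ × ℝ ↦ L (circleMap 0 p.1 p.2) (v p.2))
      (Icc 0 R ×ˢ Icc (-π) π) := by
    refine Continuous.continuousOn ?_ |>.integrableOn_compact (isCompact_Icc.prod isCompact_Icc)
    simp only [circleMap]
    fun_prop
  refine hbox.of_forall_sdiff_eq_zero polarCoord.open_target.measurableSet ?_
  rintro ⟨r, t⟩ ⟨⟨hr, ht⟩, hrt⟩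
  have hRr : R < r := not_le.1 fun h ↦ hrt ⟨⟨le_of_lt hr, h⟩, Ioo_subset_Icc_self ht⟩
  have : circleMap 0 r t ∉ tsupport L := fun h ↦ by
    exact hRr.not_ge ((le_abs_self r).trans (by simpa using hR h))
  simp [image_eq_zero_of_notMem_tsupport this]

variable {ψ : ℂ → ℂ}

lemma integral_polarCoord_target_fderiv_radial (hψ : ContDiff ℝ 1 ψ) (hψc : HasCompactSupport ψ) :
    ∫ p in polarCoord.target, fderiv ℝ ψ (circleMap 0 p.1 p.2) (circleMap 0 1 p.2) =
      -(2 * π * ψ 0) := by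
  have hint := integrableOn_polarCoord_target_clm_apply (hψ.continuous_fderiv one_ne_zero)
    (hψc.fderiv ℝ) (continuous_circleMap 0 1)
  rw [polarCoord_target, Measure.volume_eq_prod] at hint ⊢
  rw [setIntegral_prod _ hint]
  rw [IntegrableOn, ← Measure.prod_restrict] at hint
  rw [integral_integral_swap hint]
  have ray (t : ℝ) :
      ∫ r in Ioi (0 : ℝ), fderiv ℝ ψ (circleMap 0 r t) (circleMap 0 1 t) = -ψ 0 := by
    simpa [circleMap] using
      integral_Ioi_fderiv_smul hψ hψc (circleMap_ne_center one_ne_zero : circleMap 0 1 t ≠ 0)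
  simp only [ray, setIntegral_const, Real.volume_real_Ioo_of_le (neg_le_self Real.pi_nonneg)]
  rw [real_smul]
  push_cast
  ring

lemma integral_polarCoord_target_fderiv_angular (hψ : ContDiff ℝ 1 ψ) (hψc : HasCompactSupport ψ) :
    ∫ p in polarCoord.target, fderiv ℝ ψ (circleMap 0 p.1 p.2) (I * circleMap 0 1 p.2) = 0 := by
  have hint := integrableOn_polarCoord_target_clm_apply (hψ.continuous_fderiv one_ne_zero)
    (hψc.fderiv ℝ) (v := fun t ↦ I * circleMap 0 1 t) (by fun_prop)
  rw [polarCoord_target, Measure.volume_eq_prod] at hint ⊢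
  rw [setIntegral_prod _ hint]
  refine setIntegral_eq_zero_of_forall_eq_zero fun r hr ↦ ?_
  have hcircle := integral_fderiv_circleMap hψ 0 r (-π)
  have hscale (t : ℝ) : circleMap 0 r t * I = r • (I * circleMap 0 1 t) := by
    simp only [circleMap, zero_add, ofReal_one, one_mul, real_smul]
    ring
  simp only [hscale, map_smul, intervalIntegral.integral_smul] at hcircle
  rw [← integral_Ioc_eq_integral_Ioo, ← intervalIntegral.integral_of_le (by linarith [Real.pi_pos])]
  convert (smul_eq_zero.1 hcircle).resolve_left (ne_of_gt hr) using 2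
  ring

lemma integral_inv_mul_dbar (hψ : ContDiff ℝ 1 ψ) (hψc : HasCompactSupport ψ) :
    ∫ z, z⁻¹ * dbar ψ z = -(π * ψ 0) := by
  have hint {v : ℝ → ℂ} (hv : Continuous v) := integrableOn_polarCoord_target_clm_apply
    (hψ.continuous_fderiv one_ne_zero) (hψc.fderiv ℝ) hv
  -- In polar coordinates `2 e^{-it} ∂_{z̄} = ∂_r + (i / r) ∂_t`.
  have hpolar : ∀ p ∈ polarCoord.target,
      p.1 • ((Complex.polarCoord.symm p)⁻¹ * dbar ψ (Complex.polarCoord.symm p)) =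
        (fderiv ℝ ψ (circleMap 0 p.1 p.2) (circleMap 0 1 p.2) +
          I * fderiv ℝ ψ (circleMap 0 p.1 p.2) (I * circleMap 0 1 p.2)) / 2 := by
    rintro ⟨r, t⟩ ⟨hr : 0 < r, -⟩
    have hr' : (r : ℂ) ≠ 0 := ofReal_ne_zero.2 hr.ne'
    have hsymm : Complex.polarCoord.symm (r, t) = circleMap 0 r t := by
      simp [circleMap, exp_mul_I]
    have hinv : (r : ℂ) * (circleMap 0 r t)⁻¹ = (starRingEnd ℂ) (circleMap 0 1 t) := by
      rw [circleMap, circleMap]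
      simp only [zero_add, mul_inv_rev, ← exp_neg, ofReal_one, one_mul, ← exp_conj, map_mul,
        conj_ofReal, conj_I, mul_neg]
      field_simp
    rw [fderiv_apply_add_I_mul_fderiv_apply_I_mul, hsymm, real_smul, ← mul_assoc, hinv]
    ring
  rw [← Complex.integral_comp_polarCoord_symm,
    setIntegral_congr_fun polarCoord.open_target.measurableSet hpolar, integral_div,
    integral_add (hint (continuous_circleMap 0 1))
      ((hint (v := fun t ↦ I * circleMap 0 1 t) (by fun_prop)).const_mul I), integral_const_mul,
    integral_polarCoord_target_fderiv_radial hψ hψc,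
    integral_polarCoord_target_fderiv_angular hψ hψc]
  ring

lemma integral_inv_sub_mul_dbar (hψ : ContDiff ℝ 1 ψ) (hψc : HasCompactSupport ψ) (a : ℂ) :
    ∫ z, (z - a)⁻¹ * dbar ψ z = -(π * ψ a) := by
  have := integral_inv_mul_dbar (ψ := fun w ↦ ψ (w + a)) (by fun_prop)
    (hψc.comp_homeomorph (Homeomorph.addRight a))
  simp only [dbar_comp_add_right, zero_add] at this
  rw [← this, ← integral_add_right_eq_self _ a]
  simp only [add_sub_cancel_right]

lemma locallyIntegrable_inv_sub (a : ℂ) : LocallyIntegrable fun z : ℂ ↦ (z - a)⁻¹ := by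
  have h : LocallyIntegrable fun z : ℂ ↦ z⁻¹ :=
    locallyIntegrable_of_norm_le_rpow (C := 1) (α := 1) (by simp) (by simp)
      (.of_forall fun z ↦ by simp [Real.rpow_neg_one]) measurable_inv.aestronglyMeasurable
  rw [← map_sub_right_eq_self volume a] at h
  exact (locallyIntegrable_map_homeomorph (Homeomorph.subRight a)).1 h

lemma integrable_inv_sub_mul_dbar (hψ : ContDiff ℝ 1 ψ) (hψc : HasCompactSupport ψ) (a : ℂ) :
    Integrable fun z ↦ (z - a)⁻¹ * dbar ψ z :=
  (locallyIntegrable_inv_sub a).integrable_smul_right_of_hasCompactSupport (continuous_dbar hψ)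
    (hasCompactSupport_dbar hψc)

end CauchyPompeiu

/-- `f` agrees near `a`, except possibly at `a`, with `r / (z - a)` plus a function analytic at `a`:
it has at most a simple pole there, with residue `r`. The value `f a` is irrelevant. -/
def HasSimplePoleAt (f : ℂ → ℂ) (r a : ℂ) : Prop :=
  ∃ h : ℂ → ℂ, AnalyticAt ℂ h a ∧ ∀ᶠ z in 𝓝[≠] a, f z = r / (z - a) + h z

namespace HasSimplePoleAt

variable {f p q : ℂ → ℂ} {r a : ℂ}

lemma sub_analyticAt (hf : HasSimplePoleAt f r a) {g : ℂ → ℂ} (hg : AnalyticAt ℂ g a) :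
    HasSimplePoleAt (f - g) r a := by
  obtain ⟨h, hh, hfh⟩ := hf
  refine ⟨h - g, hh.sub hg, hfh.mono fun z hz ↦ ?_⟩
  simp only [Pi.sub_apply, hz]
  ring

lemma congr (hf : HasSimplePoleAt f r a) {g : ℂ → ℂ} (hgf : g =ᶠ[𝓝[≠] a] f) :
    HasSimplePoleAt g r a := by
  obtain ⟨h, hh, hfh⟩ := hf
  exact ⟨h, hh, hgf.trans hfh⟩

lemma div (hp : AnalyticAt ℂ p a) (hq : AnalyticAt ℂ q a) (hqa : q a = 0)
    (hq' : deriv q a ≠ 0) : HasSimplePoleAt (fun z ↦ p z / q z) (p a / deriv q a) a := by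
  have analyticAt_dslope {g : ℂ → ℂ} : AnalyticAt ℂ g a → AnalyticAt ℂ (dslope g a) a :=
    fun ⟨_, h⟩ ↦ ⟨_, h.has_fpower_series_dslope_fslope⟩
  let u : ℂ → ℂ := fun z ↦ p z / dslope q a z
  have hu : AnalyticAt ℂ u a := hp.div (analyticAt_dslope hq) (by rwa [dslope_same])
  refine ⟨dslope u a, analyticAt_dslope hu, eventually_mem_nhdsWithin.mono fun z hz ↦ ?_⟩
  have hza : z - a ≠ 0 := sub_ne_zero.2 hz
  have hpq : p z / q z = u z / (z - a) := by
    rw [← sub_smul_dslope_of_zero hqa z, smul_eq_mul, div_div, mul_comm]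
  have hua : u a = p a / deriv q a := by simp only [u, dslope_same]
  have hslope : (z - a) * dslope u a z = u z - u a := sub_smul_dslope u a z
  simp only [hpq, ← hua]
  field_simp
  linear_combination -hslope

lemma exists_analyticAt_eq_sub (hf : HasSimplePoleAt f r a) :
    ∃ g : ℂ → ℂ, AnalyticAt ℂ g a ∧ ∀ z ≠ a, g z = f z - r / (z - a) := by
  obtain ⟨h, hh, hfh⟩ := hf
  refine ⟨Function.update (fun z ↦ f z - r / (z - a)) a (h a), hh.congr ?_,
    fun z hz ↦ Function.update_of_ne hz _ _⟩
  refine eventuallyEq_nhds_of_eventuallyEq_nhdsNE ?_ (by simp)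
  filter_upwards [hfh, eventually_mem_nhdsWithin] with z hz hza
  rw [Function.update_of_ne hza, hz, add_sub_cancel_left]

lemma integrableAtFilter (hf : HasSimplePoleAt f r a) : IntegrableAtFilter f (𝓝 a) := by
  obtain ⟨h, hh, hfh⟩ := hf
  have hpole : IntegrableAtFilter (fun z ↦ r / (z - a)) (𝓝 a) := by
    simp only [div_eq_mul_inv]
    exact (locallyIntegrable_inv_sub a).smul r a
  have hregular : IntegrableAtFilter h (𝓝 a) := by
    obtain ⟨s, hs, hhs⟩ := hh.exists_mem_nhds_analyticOnNhd
    obtain ⟨K, hK, hKs, hKc⟩ := local_compact_nhds hs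
    exact ⟨K, hK, (hhs.continuousOn.mono hKs).integrableOn_compact hKc⟩
  obtain ⟨s, hs, hint⟩ := hpole.add hregular
  obtain ⟨t, hft, ht, hat⟩ := eventually_nhds_iff.1 (eventually_nhdsWithin_iff.1 hfh)
  refine ⟨s ∩ t, inter_mem hs (ht.mem_nhds hat), (hint.mono_set inter_subset_left).congr ?_⟩
  refine ae_restrict_of_ae_restrict_of_subset inter_subset_right ?_
  filter_upwards [ae_restrict_mem ht.measurableSet,
    ae_restrict_of_ae (compl_mem_ae_iff.2 (measure_singleton a))] with z hzt hza
    using (hft z hzt hza).symm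

end HasSimplePoleAt

section Residues

variable {f ψ : ℂ → ℂ}

lemma integrable_mul_dbar_and_integral_eq_zero (hψ : ContDiff ℝ 1 ψ) (hψc : HasCompactSupport ψ)
    (hf : ∀ z ∈ tsupport ψ, AnalyticAt ℂ f z) :
    Integrable (fun z ↦ f z * dbar ψ z) ∧ ∫ z, f z * dbar ψ z = 0 := by
  have hfψ : ContDiff ℝ 1 fun z ↦ f z * ψ z := contDiff_iff_contDiffAt.2 fun z ↦ by
    by_cases hz : z ∈ tsupport ψ
    · exact ((hf z hz).contDiffAt.restrict_scalars ℝ).mul hψ.contDiffAt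
    · refine (contDiffAt_const (c := 0)).congr_of_eventuallyEq ?_
      filter_upwards [notMem_tsupport_iff_eventuallyEq.1 hz] with w hw
      exact mul_eq_zero_of_right _ hw
  have hfψc : HasCompactSupport fun z ↦ f z * ψ z := hψc.mul_left
  have hdbar : (fun z ↦ f z * dbar ψ z) = dbar fun z ↦ f z * ψ z := by
    funext z
    by_cases hz : z ∈ tsupport ψ
    · rw [dbar_mul ((hf z hz).differentiableAt.restrictScalars ℝ) (hψ.differentiable one_ne_zero z),
        dbar_eq_zero_of_differentiableAt (hf z hz).differentiableAt, zero_mul, add_zero]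
    · rw [dbar_eq_zero_of_notMem_tsupport hz,
        dbar_eq_zero_of_notMem_tsupport fun h ↦ hz (tsupport_mul_subset_right h), mul_zero]
  rw [hdbar]
  exact ⟨(continuous_dbar hfψ).integrable_of_hasCompactSupport (hasCompactSupport_dbar hfψc),
    integral_dbar_eq_zero hfψ hfψc⟩

lemma integrable_mul_dbar_and_integral_eq_sum_residue (hψ : ContDiff ℝ 1 ψ)
    (hψc : HasCompactSupport ψ) {s : Finset ℂ} {r : ℂ → ℂ}
    (hpole : ∀ a ∈ s, HasSimplePoleAt f (r a) a)
    (hf : ∀ z ∈ tsupport ψ, z ∉ s → AnalyticAt ℂ f z) :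
    Integrable (fun z ↦ f z * dbar ψ z) ∧
      ∫ z, f z * dbar ψ z = -(π * ∑ a ∈ s, r a * ψ a) := by
  induction s using Finset.induction_on generalizing f with
  | empty =>
    simpa using integrable_mul_dbar_and_integral_eq_zero hψ hψc (by simpa using hf)
  | insert a s ha ih =>
    obtain ⟨g, hga, hgf⟩ := (hpole a (Finset.mem_insert_self a s)).exists_analyticAt_eq_sub
    let P : ℂ → ℂ := fun z ↦ r a / (z - a)
    have hP : ∀ z ≠ a, AnalyticAt ℂ P z := fun z hz ↦
      analyticAt_const.div (by fun_prop) (sub_ne_zero.2 hz)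
    have hgf_nhds : ∀ z ≠ a, g =ᶠ[𝓝 z] f - P := fun z hz ↦ (eventually_ne_nhds hz).mono hgf
    have hgpole : ∀ b ∈ s, HasSimplePoleAt g (r b) b := fun b hb ↦ by
      have hba : b ≠ a := ne_of_mem_of_not_mem hb ha
      exact ((hpole b (Finset.mem_insert_of_mem hb)).sub_analyticAt (hP b hba)).congr
        ((hgf_nhds b hba).filter_mono nhdsWithin_le_nhds)
    have hgregular : ∀ z ∈ tsupport ψ, z ∉ s → AnalyticAt ℂ g z := fun z hz hzs ↦ by
      rcases eq_or_ne z a with rfl | hza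
      · exact hga
      · exact ((hf z hz (by simp [hza, hzs])).sub (hP z hza)).congr (hgf_nhds z hza).symm
    obtain ⟨hgint, hgval⟩ := ih hgpole hgregular
    have hPint := (integrable_inv_sub_mul_dbar hψ hψc a).const_mul (r a)
    have hsplit : (fun z ↦ f z * dbar ψ z) =ᵐ[volume]
        fun z ↦ g z * dbar ψ z + r a * ((z - a)⁻¹ * dbar ψ z) := by
      filter_upwards [compl_mem_ae_iff.2 (measure_singleton a)] with z hz
      rw [hgf z hz]
      ring
    refine ⟨(hgint.add hPint).congr hsplit.symm, ?_⟩
    rw [integral_congr_ae hsplit, integral_add hgint hPint, hgval, integral_const_mul,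
      integral_inv_sub_mul_dbar hψ hψc, Finset.sum_insert ha]
    ring

end Residues

section Lattice

lemma ω_eq : ω = -1 / 2 + (√3 / 2 : ℝ) * I := by
  have hangle : 2 * π * I / 3 = ((π - π / 3 : ℝ) : ℂ) * I := by push_cast; ring
  rw [ω, hangle, exp_mul_I, ← ofReal_cos, ← ofReal_sin, Real.cos_pi_sub, Real.sin_pi_sub,
    Real.cos_pi_div_three, Real.sin_pi_div_three]
  push_cast
  ring

lemma ω_im : ω.im = √3 / 2 := by simp [ω_eq]

lemma ω_im_pos : 0 < ω.im := by rw [ω_im]; positivity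

/-- The point `mω + n` of the lattice `Λ = ℤω ⊕ ℤ` with coordinates `p = (m, n)`. -/
def latticePoint (p : ℤ × ℤ) : ℂ := p.1 * ω + p.2

lemma isClosedEmbedding_mul_add_of_im_ne_zero {τ : ℂ} (hτ : τ.im ≠ 0) :
    Topology.IsClosedEmbedding fun x : ℝ × ℝ ↦ x.1 * τ + x.2 := by
  let L : ℝ × ℝ →ₗ[ℝ] ℂ :=
    (LinearMap.toSpanSingleton ℝ ℂ τ).coprod (LinearMap.toSpanSingleton ℝ ℂ 1)
  have hL : LinearMap.ker L = ⊥ := by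
    refine LinearMap.ker_eq_bot'.2 fun x hx ↦ ?_
    have him : x.1 * τ.im = 0 := by simpa [L] using congrArg im hx
    have hfst : x.1 = 0 := (mul_eq_zero.1 him).resolve_right hτ
    have hsnd : x.2 = 0 := by simpa [L, hfst] using hx
    exact Prod.ext hfst hsnd
  have hLcoe : ⇑L = fun x ↦ x.1 * τ + x.2 := funext fun x ↦ by simp [L]
  exact hLcoe ▸ LinearMap.isClosedEmbedding_of_injective hL

lemma latticePoint_eq_comp :
    latticePoint = (fun x : ℝ × ℝ ↦ x.1 * ω + x.2) ∘ Prod.map Int.cast Int.cast :=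
  funext fun p ↦ by simp [latticePoint]

lemma injective_latticePoint : Function.Injective latticePoint := by
  rw [latticePoint_eq_comp]
  exact (isClosedEmbedding_mul_add_of_im_ne_zero ω_im_pos.ne').injective.comp
    (Int.cast_injective.prodMap Int.cast_injective)

lemma tendsto_latticePoint_cofinite : Tendsto latticePoint cofinite (cocompact ℂ) := by
  have hcast := Int.tendsto_coe_cofinite.prodMap_coprod Int.tendsto_coe_cofinite
  rw [coprod_cofinite, coprod_cocompact] at hcast
  rw [latticePoint_eq_comp]
  exact (isClosedEmbedding_mul_add_of_im_ne_zero ω_im_pos.ne').tendsto_cocompact.comp hcast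

lemma finite_preimage_latticePoint {K : Set ℂ} (hK : IsCompact K) :
    (latticePoint ⁻¹' K).Finite := by
  simpa using tendsto_latticePoint_cofinite hK.compl_mem_cocompact

end Lattice

section ThetaSeries

/-- The `n`-th term of the bilateral series `-θ(z)`. -/
def thetaTerm (z : ℂ) (n : ℤ) : ℂ :=
  exp (π * I * ((n : ℂ) + 1 / 2) ^ 2 * ω + 2 * π * I * ((n : ℂ) + 1 / 2) * (z + 1 / 2))

lemma thetaTerm_eq_jacobiTheta₂_term (z : ℂ) (n : ℤ) :
    thetaTerm z n =
      exp (π * I * (ω / 4 + z + 1 / 2)) * jacobiTheta₂_term n (z + 1 / 2 + ω / 2) ω := by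
  rw [thetaTerm, jacobiTheta₂_term, ← exp_add]
  ring_nf

lemma hasSum_thetaTerm (z : ℂ) : HasSum (thetaTerm z) (-θ z) := by
  have hsummable : Summable (thetaTerm z) := by
    simpa only [← thetaTerm_eq_jacobiTheta₂_term] using
      (hasSum_jacobiTheta₂_term (z + 1 / 2 + ω / 2) ω_im_pos).summable.mul_left
        (exp (π * I * (ω / 4 + z + 1 / 2)))
  rw [θ, neg_neg]
  exact hsummable.hasSum

lemma θ_eq_jacobiTheta₂ (z : ℂ) :
    θ z = -(exp (π * I * (ω / 4 + z + 1 / 2)) * jacobiTheta₂ (z + 1 / 2 + ω / 2) ω) := by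
  rw [eq_neg_iff_add_eq_zero, ← neg_eq_iff_add_eq_zero, ← (hasSum_thetaTerm z).tsum_eq,
    jacobiTheta₂, ← tsum_mul_left]
  exact tsum_congr (thetaTerm_eq_jacobiTheta₂_term z)

lemma differentiable_θ : Differentiable ℂ θ := by
  intro z
  have hshift : DifferentiableAt ℂ (fun z : ℂ ↦ z + 1 / 2 + ω / 2) z := by fun_prop
  have htheta := (differentiableAt_jacobiTheta₂_fst (z + 1 / 2 + ω / 2) ω_im_pos).comp z hshift
  rw [funext θ_eq_jacobiTheta₂]
  exact (DifferentiableAt.mul (by fun_prop) htheta).neg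

lemma θ_add_one (z : ℂ) : θ (z + 1) = -θ z := by
  have harg : z + 1 + 1 / 2 + ω / 2 = z + 1 / 2 + ω / 2 + 1 := by ring
  have hexp : π * I * (ω / 4 + (z + 1) + 1 / 2) = π * I * (ω / 4 + z + 1 / 2) + π * I := by ring
  rw [θ_eq_jacobiTheta₂, θ_eq_jacobiTheta₂, harg, jacobiTheta₂_add_left, hexp, exp_add,
    exp_pi_mul_I]
  ring

lemma θ_add_ω (z : ℂ) : θ (z + ω) = -(exp (-π * I * (ω + 2 * z)) * θ z) := by
  have harg : z + ω + 1 / 2 + ω / 2 = z + 1 / 2 + ω / 2 + ω := by ring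
  have hexp : exp (π * I * (ω / 4 + (z + ω) + 1 / 2)) *
      exp (-π * I * (ω + 2 * (z + 1 / 2 + ω / 2))) =
      -(exp (-π * I * (ω + 2 * z)) * exp (π * I * (ω / 4 + z + 1 / 2))) := by
    rw [← exp_add, ← exp_add, ← exp_add_pi_mul_I, exp_eq_exp_iff_exists_int]
    exact ⟨-1, by push_cast; ring⟩
  rw [θ_eq_jacobiTheta₂, θ_eq_jacobiTheta₂, harg, jacobiTheta₂_add_left', ← mul_assoc, hexp]
  ring

/-- The `n`-th term of the sine series `θ(z) = 2 ∑ (-1)ⁿ e^{πi(n+1/2)²ω} sin((2n+1)πz)`, obtained by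
pairing the indices `n` and `-(n+1)` in the definition of `θ`. -/
def thetaSineTerm (z : ℂ) (n : ℕ) : ℂ :=
  2 * (-1) ^ n * exp (π * I * (n + 1 / 2) ^ 2 * ω) * sin ((2 * n + 1 : ℕ) * (π * z))

lemma thetaTerm_add_thetaTerm_neg (z : ℂ) (n : ℕ) :
    thetaTerm z n + thetaTerm z (-(n + 1 : ℤ)) = -thetaSineTerm z n := by
  set α : ℂ := 2 * π * (n + 1 / 2) * (z + 1 / 2) with hα
  have hsin : sin ((2 * n + 1 : ℕ) * (π * z)) * (-1) ^ n = -cos α := by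
    have harg : α = (2 * n + 1 : ℕ) * (π * z) + n * π + π / 2 := by
      rw [hα]
      push_cast
      ring
    rw [harg, cos_add_pi_div_two, sin_antiperiodic.add_nat_mul_eq]
    push_cast
    ring
  calc thetaTerm z n + thetaTerm z (-(n + 1 : ℤ))
      = exp (π * I * (n + 1 / 2) ^ 2 * ω) * (exp (α * I) + exp (-α * I)) := by
        rw [thetaTerm, thetaTerm, mul_add (exp _), ← exp_add, ← exp_add, hα]
        push_cast
        ring_nf
    _ = -thetaSineTerm z n := by
        rw [← two_cos, thetaSineTerm]
        linear_combination 2 * exp (π * I * (n + 1 / 2) ^ 2 * ω) * hsin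

lemma hasSum_thetaSineTerm (z : ℂ) : HasSum (thetaSineTerm z) (θ z) := by
  simpa only [thetaTerm_add_thetaTerm_neg, neg_neg] using
    (hasSum_thetaTerm z).nat_add_neg_add_one.neg

lemma θ_neg (z : ℂ) : θ (-z) = -θ z := by
  refine (hasSum_thetaSineTerm (-z)).unique ?_
  have hterm (n : ℕ) : thetaSineTerm (-z) n = -thetaSineTerm z n := by
    simp only [thetaSineTerm, mul_neg, sin_neg]
  simpa only [← hterm] using (hasSum_thetaSineTerm z).neg

lemma θ_zero : θ 0 = 0 := self_eq_neg.1 (by simpa using θ_neg 0)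

end ThetaSeries

section ThetaZeros

lemma norm_cos_le_exp_abs_im (z : ℂ) : ‖cos z‖ ≤ Real.exp |z.im| := by
  have hexp (w : ℂ) (hw : |w.re| = |z.im|) : ‖exp w‖ ≤ Real.exp |z.im| := by
    rw [norm_exp, ← hw]
    exact Real.exp_le_exp.2 (le_abs_self _)
  have h := norm_add_le_of_le (hexp (z * I) (by simp)) (hexp (-z * I) (by simp))
  rw [cos, norm_div, norm_ofNat]
  linarith

lemma norm_sin_nat_mul_le (n : ℕ) (z : ℂ) :
    ‖sin ((n + 1 : ℕ) * z)‖ ≤ (n + 1) * Real.exp (n * |z.im|) * ‖sin z‖ := by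
  induction n with
  | zero => simp
  | succ n ih =>
    have hadd : sin ((n + 1 + 1 : ℕ) * z) =
        sin ((n + 1 : ℕ) * z) * cos z + cos ((n + 1 : ℕ) * z) * sin z := by
      rw [← sin_add]
      push_cast
      ring_nf
    have hcos : ‖cos ((n + 1 : ℕ) * z)‖ ≤ Real.exp ((n + 1) * |z.im|) := by
      refine (norm_cos_le_exp_abs_im _).trans_eq ?_
      rw [← ofReal_natCast, im_ofReal_mul, abs_mul, Nat.abs_cast, Nat.cast_add_one]
    calc ‖sin ((n + 1 + 1 : ℕ) * z)‖
        ≤ ‖sin ((n + 1 : ℕ) * z)‖ * ‖cos z‖ + ‖cos ((n + 1 : ℕ) * z)‖ * ‖sin z‖ := by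
          rw [hadd, ← norm_mul, ← norm_mul]
          exact norm_add_le _ _
      _ ≤ (n + 1) * Real.exp (n * |z.im|) * ‖sin z‖ * Real.exp |z.im| +
          Real.exp ((n + 1) * |z.im|) * ‖sin z‖ := by
          gcongr
          exact norm_cos_le_exp_abs_im z
      _ = ((n + 1 : ℕ) + 1) * Real.exp ((n + 1 : ℕ) * |z.im|) * ‖sin z‖ := by
          push_cast
          rw [add_one_mul (n : ℝ) |z.im|, Real.exp_add]
          ring

lemma norm_zero_mul_le_norm_of_hasSum {E : Type*} [NormedAddCommGroup E] {a : ℕ → E} {S : E}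
    {ρ : ℝ} (hρ₀ : 0 ≤ ρ) (hρ₁ : ρ < 1) (ha : HasSum a S) (hle : ∀ n, ‖a n‖ ≤ ‖a 0‖ * ρ ^ n) :
    ‖a 0‖ * (1 - ρ / (1 - ρ)) ≤ ‖S‖ := by
  have hgeom : HasSum (fun n ↦ ‖a 0‖ * ρ ^ (n + 1)) (‖a 0‖ * (ρ / (1 - ρ))) := by
    simpa only [pow_succ', ← div_eq_mul_inv] using
      ((hasSum_geometric_of_lt_one hρ₀ hρ₁).mul_left ρ).mul_left ‖a 0‖
  have htail : ‖S - a 0‖ ≤ ‖a 0‖ * (ρ / (1 - ρ)) := by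
    have h := (hasSum_nat_add_iff' 1).2 ha
    rw [Finset.sum_range_one] at h
    exact h.tsum_eq ▸ tsum_of_norm_bounded hgeom fun n ↦ hle (n + 1)
  have htriangle := norm_sub_norm_le (a 0) S
  rw [norm_sub_rev] at htriangle
  linarith

lemma norm_thetaSineTerm (z : ℂ) (n : ℕ) :
    ‖thetaSineTerm z n‖ =
      2 * Real.exp (-(π * √3 / 2) * (n + 1 / 2) ^ 2) * ‖sin ((2 * n + 1 : ℕ) * (π * z))‖ := by
  have hexponent : (π * I * ((n : ℂ) + 1 / 2) ^ 2 * ω).re =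
      -(π * √3 / 2) * (n + 1 / 2) ^ 2 := by
    have hcast : π * I * ((n : ℂ) + 1 / 2) ^ 2 * ω = ((π * (n + 1 / 2) ^ 2 : ℝ) : ℂ) * (I * ω) := by
      push_cast
      ring
    rw [hcast, re_ofReal_mul, I_mul_re, ω_im]
    ring
  rw [thetaSineTerm, norm_mul, norm_mul, norm_exp, hexponent]
  simp

lemma norm_thetaSineTerm_zero (z : ℂ) :
    ‖thetaSineTerm z 0‖ = 2 * Real.exp (-(π * √3 / 8)) * ‖sin (π * z)‖ := by
  have hexponent : -(π * √3 / 2) * (((0 : ℕ) : ℝ) + 1 / 2) ^ 2 = -(π * √3 / 8) := by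
    push_cast
    ring
  rw [norm_thetaSineTerm, hexponent, mul_zero, zero_add, Nat.cast_one, one_mul]

lemma exp_neg_pi_mul_sqrt_three_div_two_le_one_seventh : Real.exp (-(π * √3 / 2)) ≤ 1 / 7 := by
  have hsqrt : 1.7 ≤ √3 := Real.le_sqrt_of_sq_le (by norm_num)
  have htwo : 2 ≤ π * √3 / 2 := by nlinarith [Real.pi_gt_three]
  rw [Real.exp_neg, one_div]
  refine inv_anti₀ (by norm_num) ?_
  calc (7 : ℝ) ≤ Real.exp 1 ^ 2 := by nlinarith [Real.exp_one_gt_d9]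
    _ = Real.exp 2 := by rw [← Real.exp_nat_mul]; norm_num
    _ ≤ Real.exp (π * √3 / 2) := Real.exp_le_exp.2 htwo

lemma exp_neg_mul_add_half_sq_mul_exp_le {a : ℝ} (ha : 0 ≤ a) (n : ℕ) :
    Real.exp (-a * (n + 1 / 2) ^ 2) * Real.exp (a * n) ≤
      Real.exp (-a / 4) * Real.exp (-a) ^ n := by
  have hn : (n : ℝ) ≤ (n : ℝ) ^ 2 := by exact_mod_cast Nat.le_self_pow two_ne_zero n
  rw [← Real.exp_nat_mul, ← Real.exp_add, ← Real.exp_add]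
  refine Real.exp_le_exp.2 ?_
  nlinarith

lemma norm_thetaSineTerm_le {z : ℂ} (hz : |z.im| ≤ √3 / 4) (n : ℕ) :
    ‖thetaSineTerm z n‖ ≤ ‖thetaSineTerm z 0‖ * (3 / 7) ^ n := by
  set a := π * √3 / 2 with ha
  have him : |(π * z).im| ≤ a / 2 := by
    rw [im_ofReal_mul, abs_mul, abs_of_pos Real.pi_pos, ha]
    linarith [mul_le_mul_of_nonneg_left hz Real.pi_pos.le]
  have hodd : (2 * n + 1 : ℝ) ≤ 3 ^ n := by
    calc (2 * n + 1 : ℝ) = 1 + n * 2 := by ring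
      _ ≤ (1 + 2) ^ n := one_add_mul_le_pow (by norm_num) n
      _ = 3 ^ n := by norm_num
  have hsin : ‖sin ((2 * n + 1 : ℕ) * (π * z))‖ ≤ 3 ^ n * Real.exp (a * n) * ‖sin (π * z)‖ := by
    refine (norm_sin_nat_mul_le (2 * n) (π * z)).trans ?_
    push_cast
    gcongr ?_ * Real.exp ?_ * _
    nlinarith
  have hgauss : Real.exp (-a * (n + 1 / 2) ^ 2) * Real.exp (a * n) ≤
      Real.exp (-a / 4) * (1 / 7) ^ n := by
    refine (exp_neg_mul_add_half_sq_mul_exp_le (by positivity) n).trans ?_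
    gcongr
    exact exp_neg_pi_mul_sqrt_three_div_two_le_one_seventh
  calc ‖thetaSineTerm z n‖
      = 2 * Real.exp (-a * (n + 1 / 2) ^ 2) * ‖sin ((2 * n + 1 : ℕ) * (π * z))‖ :=
        norm_thetaSineTerm z n
    _ ≤ 2 * Real.exp (-a * (n + 1 / 2) ^ 2) * (3 ^ n * Real.exp (a * n) * ‖sin (π * z)‖) := by
        gcongr
    _ = 2 * (Real.exp (-a * (n + 1 / 2) ^ 2) * Real.exp (a * n)) * 3 ^ n * ‖sin (π * z)‖ := by ring
    _ ≤ 2 * (Real.exp (-a / 4) * (1 / 7) ^ n) * 3 ^ n * ‖sin (π * z)‖ := by gcongr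
    _ = ‖thetaSineTerm z 0‖ * (3 / 7) ^ n := by
        have hquarter : -a / 4 = -(π * √3 / 8) := by rw [ha]; ring
        rw [norm_thetaSineTerm_zero, hquarter, div_pow, div_pow, one_pow]
        ring

lemma norm_sin_pi_mul_le_norm_θ {z : ℂ} (hz : |z.im| ≤ √3 / 4) :
    ‖sin (π * z)‖ ≤ 2 * Real.exp (π * √3 / 8) * ‖θ z‖ := by
  have h := norm_zero_mul_le_norm_of_hasSum (by norm_num) (by norm_num) (hasSum_thetaSineTerm z)
    (norm_thetaSineTerm_le hz)
  rw [norm_thetaSineTerm_zero, Real.exp_neg] at h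
  have hpos := Real.exp_pos (π * √3 / 8)
  field_simp at h
  linarith

-- Otherwise `sin (π z) = O(θ z) = o(z)` at `0`.
lemma deriv_θ_zero_ne_zero : deriv θ 0 ≠ 0 := by
  intro hderiv
  have hθ : θ =o[𝓝 0] fun z ↦ z := by
    simpa [hderiv, θ_zero] using hasDerivAt_iff_isLittleO.1 (differentiable_θ 0).hasDerivAt
  have hstrip : ∀ᶠ z : ℂ in 𝓝 0, |z.im| ≤ √3 / 4 := by
    have hcont : Continuous fun z : ℂ ↦ |z.im| := by fun_prop
    exact (hcont.tendsto 0).eventually_le_const (by simp)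
  have hsin : (fun z ↦ sin (π * z)) =o[𝓝 0] fun z : ℂ ↦ z :=
    (Asymptotics.IsBigO.of_bound _ (hstrip.mono fun z ↦ norm_sin_pi_mul_le_norm_θ)).trans_isLittleO
      hθ
  have hzero : HasDerivAt (fun z : ℂ ↦ sin (π * z)) 0 0 :=
    hasDerivAt_iff_isLittleO.2 (by simpa using hsin)
  have hpi : HasDerivAt (fun z : ℂ ↦ sin (π * z)) π 0 := by
    simpa using ((hasDerivAt_id (0 : ℂ)).const_mul (π : ℂ)).csin
  exact ofReal_ne_zero.2 Real.pi_ne_zero (hpi.unique hzero)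

lemma exists_eq_latticePoint_of_θ_eq_zero {z : ℂ} (hz : θ z = 0) : ∃ p, z = latticePoint p := by
  have hperiodic : Function.Periodic (fun w ↦ θ w = 0) ω := fun w ↦ by simp [θ_add_ω, exp_ne_zero]
  let m : ℤ := round (z.im / (√3 / 2))
  have hm : θ (z - m * ω) = 0 := by simpa only [hperiodic.sub_int_mul_eq m] using hz
  have hstrip : |(z - m * ω).im| ≤ √3 / 4 := by
    have him : (z - m * ω).im = (z.im / (√3 / 2) - m) * (√3 / 2) := by
      simp only [sub_im, mul_im, intCast_re, ω_im, intCast_im, zero_mul, add_zero]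
      field_simp
    rw [him, abs_mul, abs_of_pos (by positivity : 0 < √3 / 2)]
    have hround : |z.im / (√3 / 2) - m| ≤ 1 / 2 := abs_sub_round _
    nlinarith [Real.sqrt_nonneg 3]
  have hsin : sin (π * (z - m * ω)) = 0 := by
    simpa [hm] using norm_sin_pi_mul_le_norm_θ hstrip
  obtain ⟨n, hn⟩ := sin_eq_zero_iff.1 hsin
  have hpi : (π : ℂ) ≠ 0 := ofReal_ne_zero.2 Real.pi_ne_zero
  have hzmn : z - m * ω = n := mul_left_cancel₀ hpi (hn.trans (mul_comm _ _))
  exact ⟨(m, n), by rw [latticePoint, ← hzmn]; ring⟩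

end ThetaZeros

section Kernel

/-- The non-holomorphic factor `e^{(i/2)(z - z̄)k} = e^{-k Im z}` of `F_k`. -/
def expFactor (k z : ℂ) : ℂ := exp (-(k * z.im))

/-- The meromorphic factor `θ(z - z(k))/θ(z)` of `F_k`. -/
def thetaQuotient (k z : ℂ) : ℂ := θ (z - zmap k) / θ z

lemma F_eq_expFactor_mul_thetaQuotient (k z : ℂ) : F k z = expFactor k z * thetaQuotient k z := by
  have hexp : I / 2 * (z - (starRingEnd ℂ) z) * k = -(k * z.im) := by
    rw [sub_conj]
    push_cast
    linear_combination z.im * k * I_sq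
  rw [F, hexp, expFactor, thetaQuotient, mul_div_assoc]

lemma expFactor_ne_zero (k z : ℂ) : expFactor k z ≠ 0 := exp_ne_zero _

lemma expFactor_add (k z w : ℂ) : expFactor k (z + w) = expFactor k z * expFactor k w := by
  simp only [expFactor, add_im, ofReal_add, mul_add, neg_add, exp_add]

lemma contDiff_expFactor (k : ℂ) {n : WithTop ℕ∞} : ContDiff ℝ n (expFactor k) := by
  have him : ContDiff ℝ n fun z : ℂ ↦ (z.im : ℂ) := ofRealCLM.contDiff.comp imCLM.contDiff
  exact (contDiff_const.mul him).neg.cexp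

lemma dbar_expFactor (k z : ℂ) : dbar (expFactor k) z = -(I / 2 * k * expFactor k z) := by
  have him : HasFDerivAt (fun z : ℂ ↦ (z.im : ℂ)) (ofRealCLM ∘L imCLM) z :=
    (ofRealCLM ∘L imCLM).hasFDerivAt
  have hexp : HasFDerivAt (expFactor k) _ z := (him.const_mul k).neg.cexp
  rw [dbar, hexp.fderiv]
  simp only [Pi.neg_apply, smul_neg, neg_apply, smul_apply, ContinuousLinearMap.comp_apply,
    imCLM_apply, one_im, ofRealCLM_apply, ofReal_zero, smul_eq_mul, mul_zero, neg_zero, I_im,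
    ofReal_one, mul_one, mul_neg, zero_add, expFactor]
  ring

lemma expFactor_mul_eq_dbar {χ : ℂ → ℂ} {z : ℂ} (k : ℂ) (hχ : DifferentiableAt ℝ χ z) :
    expFactor k z * (2 * I * dbar χ z + k * χ z) =
      2 * I * dbar (fun w ↦ expFactor k w * χ w) z := by
  rw [dbar_mul ((contDiff_expFactor k (n := 1)).differentiable one_ne_zero z) hχ, dbar_expFactor]
  linear_combination expFactor k z * k * χ z * I_sq

lemma thetaQuotient_add_one (k z : ℂ) : thetaQuotient k (z + 1) = thetaQuotient k z := by
  simp only [thetaQuotient, add_sub_right_comm z 1 (zmap k), θ_add_one, neg_div_neg_eq]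

lemma thetaQuotient_add_ω (k z : ℂ) :
    thetaQuotient k (z + ω) = exp (√3 / 2 * k) * thetaQuotient k z := by
  have hexp : exp (-π * I * (ω + 2 * (z - zmap k))) =
      exp (√3 / 2 * k) * exp (-π * I * (ω + 2 * z)) := by
    have hpi : (π : ℂ) ≠ 0 := ofReal_ne_zero.2 Real.pi_ne_zero
    rw [← exp_add, zmap]
    congr 1
    field_simp
    ring
  rw [thetaQuotient, thetaQuotient, add_sub_right_comm, θ_add_ω, θ_add_ω, hexp, neg_div_neg_eq,
    mul_right_comm, mul_comm _ (θ z), mul_div_mul_right _ _ (exp_ne_zero _), mul_div_assoc]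

lemma F_add_one (k z : ℂ) : F k (z + 1) = F k z := by
  simp only [F_eq_expFactor_mul_thetaQuotient, thetaQuotient_add_one, expFactor, add_im, one_im,
    add_zero]

lemma F_add_ω (k z : ℂ) : F k (z + ω) = F k z := by
  have hexp : expFactor k ω * exp (√3 / 2 * k) = 1 := by
    rw [expFactor, ω_im, ← exp_add, exp_eq_one_iff]
    exact ⟨0, by push_cast; ring⟩
  rw [F_eq_expFactor_mul_thetaQuotient, F_eq_expFactor_mul_thetaQuotient, expFactor_add,
    thetaQuotient_add_ω]
  linear_combination expFactor k z * thetaQuotient k z * hexp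

lemma F_sub_latticePoint (k z : ℂ) (p : ℤ × ℤ) : F k (z - latticePoint p) = F k z := by
  have hone : Function.Periodic (F k) 1 := F_add_one k
  have hω : Function.Periodic (F k) ω := F_add_ω k
  rw [latticePoint, ← sub_sub, ← mul_one (p.2 : ℂ), hone.sub_int_mul_eq, hω.sub_int_mul_eq]

lemma thetaQuotient_eq_sub_latticePoint (k z : ℂ) (p : ℤ × ℤ) :
    thetaQuotient k z =
      (expFactor k (latticePoint p))⁻¹ * thetaQuotient k (z - latticePoint p) := by
  have hexp : expFactor k z = expFactor k (z - latticePoint p) * expFactor k (latticePoint p) := by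
    rw [← expFactor_add, sub_add_cancel]
  have hF := F_sub_latticePoint k z p
  rw [F_eq_expFactor_mul_thetaQuotient, F_eq_expFactor_mul_thetaQuotient, hexp, mul_assoc] at hF
  rw [mul_left_cancel₀ (expFactor_ne_zero _ _) hF, inv_mul_cancel_left₀ (expFactor_ne_zero _ _)]

lemma hasSimplePoleAt_thetaQuotient_latticePoint (k : ℂ) (p : ℤ × ℤ) :
    HasSimplePoleAt (thetaQuotient k)
      ((expFactor k (latticePoint p))⁻¹ * θ (-zmap k) / deriv θ 0) (latticePoint p) := by
  set γ := latticePoint p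
  have hθ : Differentiable ℂ fun z ↦ θ (z - γ) := differentiable_θ.comp (by fun_prop)
  have hnum : Differentiable ℂ fun z ↦ (expFactor k γ)⁻¹ * θ (z - γ - zmap k) :=
    (differentiable_θ.comp (by fun_prop)).const_mul _
  have hderiv : deriv (fun z ↦ θ (z - γ)) γ = deriv θ 0 := by
    rw [deriv_comp_sub_const, sub_self]
  have hpole := HasSimplePoleAt.div (hnum.analyticAt γ) (hθ.analyticAt γ) (by simp [θ_zero])
    (by rw [hderiv]; exact deriv_θ_zero_ne_zero)
  simp only [hderiv, sub_self, zero_sub, mul_div_assoc] at hpole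
  rw [mul_div_assoc]
  exact hpole.congr (.of_forall fun z ↦ thetaQuotient_eq_sub_latticePoint k z p)

lemma analyticAt_thetaQuotient (k : ℂ) {z : ℂ} (hz : z ∉ range latticePoint) :
    AnalyticAt ℂ (thetaQuotient k) z := by
  have hnum : Differentiable ℂ fun z ↦ θ (z - zmap k) := differentiable_θ.comp (by fun_prop)
  refine (hnum.analyticAt z).div (differentiable_θ.analyticAt z) fun hθ ↦ hz ?_
  obtain ⟨p, rfl⟩ := exists_eq_latticePoint_of_θ_eq_zero hθ
  exact mem_range_self p

lemma locallyIntegrable_F (k : ℂ) : LocallyIntegrable (F k) := by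
  have hquot : LocallyIntegrable (thetaQuotient k) := fun z ↦ by
    by_cases hz : z ∈ range latticePoint
    · obtain ⟨p, rfl⟩ := hz
      exact (hasSimplePoleAt_thetaQuotient_latticePoint k p).integrableAtFilter
    · refine HasSimplePoleAt.integrableAtFilter (r := 0) ⟨_, analyticAt_thetaQuotient k hz, ?_⟩
      exact .of_forall fun w ↦ by simp
  rw [funext (F_eq_expFactor_mul_thetaQuotient k)]
  exact hquot.continuous_mul (contDiff_expFactor k (n := 0)).continuous

lemma integral_thetaQuotient_mul_dbar (k : ℂ) {ψ : ℂ → ℂ} (hψ : ContDiff ℝ 1 ψ)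
    (hψc : HasCompactSupport ψ) {S : Finset (ℤ × ℤ)}
    (hS : ∀ p, latticePoint p ∈ tsupport ψ → p ∈ S) :
    ∫ z, thetaQuotient k z * dbar ψ z =
      π * θ (zmap k) / deriv θ 0 *
        ∑ p ∈ S, (expFactor k (latticePoint p))⁻¹ * ψ (latticePoint p) := by
  classical
  let s : Finset ℂ := S.image latticePoint
  let r : ℂ → ℂ := fun γ ↦ (expFactor k γ)⁻¹ * θ (-zmap k) / deriv θ 0
  have hpole : ∀ γ ∈ s, HasSimplePoleAt (thetaQuotient k) (r γ) γ := fun γ hγ ↦ by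
    obtain ⟨p, -, rfl⟩ := Finset.mem_image.1 hγ
    exact hasSimplePoleAt_thetaQuotient_latticePoint k p
  have hregular : ∀ z ∈ tsupport ψ, z ∉ s → AnalyticAt ℂ (thetaQuotient k) z := fun z hz hzs ↦ by
    refine analyticAt_thetaQuotient k ?_
    rintro ⟨p, rfl⟩
    exact hzs (Finset.mem_image_of_mem _ (hS p hz))
  rw [(integrable_mul_dbar_and_integral_eq_sum_residue hψ hψc hpole hregular).2,
    Finset.sum_image injective_latticePoint.injOn, Finset.mul_sum, Finset.mul_sum,
    ← Finset.sum_neg_distrib]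
  refine Finset.sum_congr rfl fun p _ ↦ ?_
  simp only [r, θ_neg]
  ring

lemma integral_F_mul (k : ℂ) {χ : ℂ → ℂ} (hχ : ContDiff ℝ 1 χ) (hχc : HasCompactSupport χ)
    {S : Finset (ℤ × ℤ)} (hS : ∀ p, latticePoint p ∈ tsupport χ → p ∈ S) :
    ∫ z, F k z * (2 * I * dbar χ z + k * χ z) = c k * ∑ p ∈ S, χ (latticePoint p) := by
  let ψ : ℂ → ℂ := fun z ↦ expFactor k z * χ z
  have hintegrand (z : ℂ) : F k z * (2 * I * dbar χ z + k * χ z) =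
      2 * I * (thetaQuotient k z * dbar ψ z) := by
    rw [F_eq_expFactor_mul_thetaQuotient, mul_right_comm,
      expFactor_mul_eq_dbar k (hχ.differentiable one_ne_zero z)]
    ring
  have hcancel (p : ℤ × ℤ) : (expFactor k (latticePoint p))⁻¹ * ψ (latticePoint p) =
      χ (latticePoint p) := inv_mul_cancel_left₀ (expFactor_ne_zero k _) _
  simp only [hintegrand]
  rw [integral_const_mul, integral_thetaQuotient_mul_dbar k ((contDiff_expFactor k).mul hχ)
    hχc.mul_left fun p hp ↦ hS p (tsupport_mul_subset_right hp), Finset.sum_congr rfl fun p _ ↦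
    hcancel p, c]
  ring

end Kernel

theorem stmt4_general (k : ℂ) :
    LocallyIntegrable (F k) volume ∧
    ∀ χ : ℂ → ℂ, ContDiff ℝ 1 χ → HasCompactSupport χ →
      ({p : ℤ × ℤ | χ ((p.1 : ℂ) * ω + (p.2 : ℂ)) ≠ 0}.Finite ∧
       ∫ z : ℂ, F k z * (2 * Complex.I * dbar χ z + k * χ z)
         = c k * ∑' p : ℤ × ℤ, χ ((p.1 : ℂ) * ω + (p.2 : ℂ))) := by
  refine ⟨locallyIntegrable_F k, fun χ hχ hχc ↦ ?_⟩
  have hfinite : (latticePoint ⁻¹' tsupport χ).Finite := finite_preimage_latticePoint hχc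
  refine ⟨hfinite.subset fun p hp ↦ subset_tsupport χ hp, ?_⟩
  rw [integral_F_mul k hχ hχc fun p ↦ hfinite.mem_toFinset.2]
  congr 1
  refine (tsum_eq_sum fun p hp ↦ ?_).symm
  exact image_eq_zero_of_notMem_tsupport fun h ↦ hp (hfinite.mem_toFinset.2 h)

theorem stmt4 (k : ℂ) :
    LocallyIntegrable (F k) volume ∧
    ∀ χ : ℂ → ℂ, ContDiff ℝ (⊤ : ℕ∞) χ → HasCompactSupport χ →
      ({p : ℤ × ℤ | χ ((p.1 : ℂ) * ω + (p.2 : ℂ)) ≠ 0}.Finite ∧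
       ∫ z : ℂ, F k z * (2 * Complex.I * dbar χ z + k * χ z)
         = c k * ∑' p : ℤ × ℤ, χ ((p.1 : ℂ) * ω + (p.2 : ℂ))) :=
  ⟨(stmt4_general k).1, fun χ hχ ↦ (stmt4_general k).2 χ (hχ.of_le (by simp))⟩

end
end

section
/- Let U₊, U₋ : ℂ → ℂ be real-analytic, let α, k ∈ ℂ, and let w = (w₁,w₂) : ℂ → ℂ² be real-analytic satisfying 2D_{z̄}w₁ + αU₊w₂ + kw₁ = 0 and αU₋w₁ + 2D_{z̄}w₂ + kw₂ = 0 on all of ℂ. If w(z₀) = 0 for some z₀ ∈ ℂ, then (2D_{z̄})^ℓ w(z₀) = 0 for every ℓ ≥ 0, and there exists a real-analytic w₀ : ℂ → ℂ² with w(z) = (z−z₀)·w₀(z) for all z ∈ ℂ. -/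
open Complex

noncomputable section

/-- `2 D_{z̄} u = -i (∂_x u + i ∂_y u)`. -/
def Dbar2 (u : ℂ → ℂ) : ℂ → ℂ := fun z =>
  -Complex.I * (fderiv ℝ u z 1 + Complex.I * fderiv ℝ u z Complex.I)

/-- Real-analyticity of a map `ℂ ≅ ℝ² → ℂ`. -/
def RealAnalytic (f : ℂ → ℂ) : Prop := ∀ z : ℂ, AnalyticAt ℝ f z

open Filter Topology
open scoped ComplexConjugate ContDiff

/-!
Collecting the terms divisible by `h = z - z₀` in the Taylor series of a real-analytic `f` in `h`
and `conj h` gives `f z = (z - z₀) * V z + G (conj (z - z₀))` near `z₀`, with `V` real-analytic and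
`G` holomorphic. Since `Dbar2` kills `z - z₀`, applying it `ℓ` times yields
`(Dbar2^[ℓ] f) z₀ = (-2 * I) ^ ℓ * iteratedDeriv ℓ G 0`; hence `z - z₀` divides `f` as soon as all
these iterates vanish. For a solution `w` of the system they do: the system turns `Dbar2` of a
combination of the components of `w` into another such combination, and these all vanish where `w`
does.
-/

lemma tendsto_conj_sub (z₀ : ℂ) : Tendsto (fun z => conj (z - z₀)) (𝓝 z₀) (𝓝 0) := by
  have : Continuous fun z => conj (z - z₀) := by fun_prop
  simpa using this.tendsto z₀

lemma radius_pos_of_norm_le_pow_mul {𝕜 𝕜' E E' F F' : Type*}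
    [NontriviallyNormedField 𝕜] [NormedAddCommGroup E] [NormedSpace 𝕜 E]
    [NormedAddCommGroup F] [NormedSpace 𝕜 F]
    [NontriviallyNormedField 𝕜'] [NormedAddCommGroup E'] [NormedSpace 𝕜' E']
    [NormedAddCommGroup F'] [NormedSpace 𝕜' F']
    {p : FormalMultilinearSeries 𝕜 E F} {q : FormalMultilinearSeries 𝕜' E' F'} {a : ℝ}
    (ha : 0 < a) (hp : 0 < p.radius) (hq : ∀ n, ‖q n‖ ≤ a ^ n * ‖p n‖) : 0 < q.radius := by
  obtain ⟨C, r, -, hr, hpC⟩ := p.le_mul_pow_of_radius_pos hp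
  have hs : 0 < (a * r)⁻¹ := by positivity
  lift (a * r)⁻¹ to NNReal using hs.le with s hs_eq
  refine lt_of_lt_of_le (by exact_mod_cast hs) (q.le_radius_of_bound C (r := s) fun n => ?_)
  calc ‖q n‖ * (s : ℝ) ^ n ≤ a ^ n * (C * r ^ n) * s ^ n := by
        gcongr
        exact (hq n).trans (by gcongr; exact hpC n)
    _ = C * (a * r * s) ^ n := by ring
    _ = C := by rw [hs_eq, mul_inv_cancel₀ (by positivity), one_pow, mul_one]

section Decomposition

variable {F : Type*} [NormedAddCommGroup F] [NormedSpace ℂ F]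

lemma exists_eq_smul_add_conj_smul (L : ℂ →L[ℝ] F) :
    ∃ a b : F, ‖a‖ ≤ ‖L‖ ∧ ‖b‖ ≤ ‖L‖ ∧ ∀ h : ℂ, L h = h • a + conj h • b := by
  have norm_one : ‖L 1‖ ≤ ‖L‖ := by simpa using L.le_opNorm 1
  have norm_I : ‖I • L I‖ ≤ ‖L‖ := by simpa [norm_smul] using L.le_opNorm I
  have norm_half {x : F} (hx : ‖x‖ ≤ ‖L 1‖ + ‖I • L I‖) : ‖(2⁻¹ : ℂ) • x‖ ≤ ‖L‖ := by
    rw [norm_smul, norm_inv, Complex.norm_ofNat]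
    linarith
  refine ⟨(2⁻¹ : ℂ) • (L 1 - I • L I), (2⁻¹ : ℂ) • (L 1 + I • L I),
    norm_half (norm_sub_le _ _), norm_half (norm_add_le _ _), fun h => ?_⟩
  have re_eq : (h + conj h) * 2⁻¹ = h.re := by rw [re_eq_add_conj, div_eq_mul_inv]
  have im_eq : (conj h - h) * 2⁻¹ * I = h.im := by
    rw [im_eq_sub_conj]
    field_simp
    linear_combination (conj h - h) * I_sq
  calc L h = L (h.re • (1 : ℂ) + h.im • I) := by simp [re_add_im]
    _ = (h.re : ℂ) • L 1 + (h.im : ℂ) • L I := by rw [map_add, map_smul, map_smul]; rfl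
    _ = h • (2⁻¹ : ℂ) • (L 1 - I • L I) + conj h • (2⁻¹ : ℂ) • (L 1 + I • L I) := by
      rw [← re_eq, ← im_eq]
      module

lemma exists_apply_const_eq_smul_add_conj_smul {n : ℕ} (p : ℂ [×(n + 1)]→L[ℝ] F) :
    ∃ a b : ℂ [×n]→L[ℝ] F, ‖a‖ ≤ ‖p‖ ∧ ‖b‖ ≤ ‖p‖ ∧
      ∀ h : ℂ, p (fun _ => h) = h • a (fun _ => h) + conj h • b (fun _ => h) := by
  obtain ⟨a, b, ha, hb, hab⟩ := exists_eq_smul_add_conj_smul p.curryLeft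
  rw [p.curryLeft_norm] at ha hb
  refine ⟨a, b, ha, hb, fun h => ?_⟩
  calc p (fun _ => h) = p.curryLeft h (fun _ => h) :=
        congrArg p (Fin.cons_self_tail fun _ => h).symm
    _ = h • a (fun _ => h) + conj h • b (fun _ => h) := by rw [hab]; rfl

lemma exists_apply_const_eq_smul_add_conj_pow_smul {n : ℕ} (p : ℂ [×(n + 1)]→L[ℝ] F) :
    ∃ (q : ℂ [×n]→L[ℝ] F) (c : F), ‖q‖ ≤ 2 ^ n * ‖p‖ ∧ ‖c‖ ≤ ‖p‖ ∧
      ∀ h : ℂ, p (fun _ => h) = h • q (fun _ => h) + conj h ^ (n + 1) • c := by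
  induction n with
  | zero =>
    obtain ⟨a, b, ha, hb, hp⟩ := exists_apply_const_eq_smul_add_conj_smul p
    refine ⟨a, b 0, by simpa using ha, by simpa using (b.le_opNorm 0).trans (by simpa), fun h => ?_⟩
    rw [hp, zero_add, pow_one, Subsingleton.elim (0 : Fin 0 → ℂ) fun _ => h]
  | succ n ih =>
    obtain ⟨a, b, ha, hb, hp⟩ := exists_apply_const_eq_smul_add_conj_smul p
    obtain ⟨q, c, hq, hc, hb_eq⟩ := ih b
    let conj_smul_q : ℂ [×(n + 1)]→L[ℝ] F :=
      ((conjCLE : ℂ →L[ℝ] ℂ).smulRight q).uncurryLeft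
    have conj_smul_q_apply (h : ℂ) : conj_smul_q (fun _ => h) = conj h • q fun _ => h := rfl
    have norm_conj_smul_q : ‖conj_smul_q‖ ≤ 2 ^ n * ‖p‖ := by
      have norm_smulRight_le : ‖(conjCLE : ℂ →L[ℝ] ℂ).smulRight q‖ ≤ ‖q‖ :=
        ContinuousLinearMap.opNorm_le_bound _ (norm_nonneg q) fun h => by
          simp [norm_smul, mul_comm]
      rw [ContinuousLinearMap.uncurryLeft_norm]
      exact norm_smulRight_le.trans (hq.trans (by gcongr))
    refine ⟨a + conj_smul_q, c, ?_, hc.trans hb, fun h => ?_⟩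
    · have one_le : (1 : ℝ) ≤ 2 ^ n := one_le_pow₀ one_le_two
      calc ‖a + conj_smul_q‖ ≤ 1 * ‖p‖ + 2 ^ n * ‖p‖ := by
            rw [one_mul]
            exact norm_add_le_of_le ha norm_conj_smul_q
        _ ≤ 2 ^ n * ‖p‖ + 2 ^ n * ‖p‖ := by gcongr
        _ = 2 ^ (n + 1) * ‖p‖ := by ring
    · rw [hp, hb_eq, add_apply, conj_smul_q_apply]
      module

lemma exists_series_smul_add_conj_smul {p : FormalMultilinearSeries ℝ ℂ F} (hp : 0 < p.radius) :
    ∃ (q : FormalMultilinearSeries ℝ ℂ F) (g : FormalMultilinearSeries ℂ ℂ F),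
      0 < q.radius ∧ 0 < g.radius ∧ ∀ n h, p (n + 1) (fun _ => h) =
        h • q n (fun _ => h) + conj h • g n (fun _ => conj h) := by
  choose q c hq hc hp_eq using fun n => exists_apply_const_eq_smul_add_conj_pow_smul (p (n + 1))
  rw [← p.radius_shift] at hp
  have norm_shift (n : ℕ) : ‖p.shift n‖ = ‖p (n + 1)‖ :=
    ContinuousMultilinearMap.curryRight_norm _
  refine ⟨q, fun n => ContinuousMultilinearMap.mkPiRing ℂ (Fin n) (c n),
    radius_pos_of_norm_le_pow_mul two_pos hp fun n => ?_,
    hp.trans_le (FormalMultilinearSeries.radius_le_of_le fun n => ?_), fun n h => ?_⟩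
  · rw [norm_shift]
    exact hq n
  · rw [ContinuousMultilinearMap.norm_mkPiRing, norm_shift]
    exact hc n
  · rw [hp_eq, ContinuousMultilinearMap.mkPiRing_apply, Fin.prod_const, smul_smul, ← pow_succ']

theorem exists_eventuallyEq_smul_add_comp_conj [CompleteSpace F] {f : ℂ → F} {z₀ : ℂ}
    (hf : AnalyticAt ℝ f z₀) :
    ∃ V G : ℂ → F, AnalyticAt ℝ V z₀ ∧ AnalyticAt ℂ G 0 ∧
      f =ᶠ[𝓝 z₀] fun z => (z - z₀) • V z + G (conj (z - z₀)) := by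
  obtain ⟨p, hp⟩ := hf
  obtain ⟨q, g, hq, hg, hp_eq⟩ := exists_series_smul_add_conj_smul hp.radius_pos
  have hV : HasFPowerSeriesAt (fun z => q.sum (z - z₀)) q z₀ := by
    simpa using ((q.hasFPowerSeriesOnBall hq).comp_sub z₀).hasFPowerSeriesAt
  have hG := (g.hasFPowerSeriesOnBall hg).hasFPowerSeriesAt
  refine ⟨fun z => q.sum (z - z₀), fun w => f z₀ + w • g.sum w, hV.analyticAt,
    analyticAt_const.add (analyticAt_id.smul hG.analyticAt), ?_⟩
  filter_upwards [hp.eventually_hasSum_sub, hV.eventually_hasSum_sub,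
    (tendsto_conj_sub z₀).eventually hG.eventually_hasSum] with z hpz hVz hGz
  rw [zero_add] at hGz
  have hasSum_tail := (hVz.const_smul (z - z₀)).add (hGz.const_smul (conj (z - z₀)))
  simp only [← hp_eq] at hasSum_tail
  rw [hpz.unique ((hasSum_nat_add_iff 1).1 hasSum_tail), Finset.sum_range_one, hp.coeff_zero]
  abel

end Decomposition

section Dbar

lemma dbar2_eq_of_hasFDerivAt {u : ℂ → ℂ} {u' : ℂ →L[ℝ] ℂ} {z : ℂ} (hu : HasFDerivAt u u' z) :
    Dbar2 u z = -I * (u' 1 + I * u' I) := by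
  rw [Dbar2, hu.fderiv]

lemma dbar2_congr {u v : ℂ → ℂ} {z : ℂ} (h : u =ᶠ[𝓝 z] v) : Dbar2 u =ᶠ[𝓝 z] Dbar2 v := by
  filter_upwards [h.fderiv (𝕜 := ℝ)] with y hy
  rw [Dbar2, Dbar2, hy]

lemma dbar2_add {u v : ℂ → ℂ} {z : ℂ} (hu : DifferentiableAt ℝ u z)
    (hv : DifferentiableAt ℝ v z) :
    Dbar2 (fun y => u y + v y) z = Dbar2 u z + Dbar2 v z := by
  rw [dbar2_eq_of_hasFDerivAt (hu.hasFDerivAt.fun_add hv.hasFDerivAt)]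
  simp only [Dbar2, add_apply]
  ring

lemma dbar2_sum {ι : Type*} {s : Finset ι} {u : ι → ℂ → ℂ} {z : ℂ}
    (hu : ∀ i ∈ s, DifferentiableAt ℝ (u i) z) :
    Dbar2 (fun y => ∑ i ∈ s, u i y) z = ∑ i ∈ s, Dbar2 (u i) z := by
  rw [dbar2_eq_of_hasFDerivAt (.fun_sum fun i hi => (hu i hi).hasFDerivAt)]
  simp only [Dbar2, sum_apply, Finset.mul_sum, ← Finset.sum_add_distrib]

lemma dbar2_mul {u v : ℂ → ℂ} {z : ℂ} (hu : DifferentiableAt ℝ u z)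
    (hv : DifferentiableAt ℝ v z) :
    Dbar2 (fun y => u y * v y) z = Dbar2 u z * v z + u z * Dbar2 v z := by
  rw [dbar2_eq_of_hasFDerivAt (hu.hasFDerivAt.fun_mul hv.hasFDerivAt)]
  simp only [Dbar2, add_apply, smul_apply, smul_eq_mul]
  ring

lemma dbar2_eq_zero_of_differentiableAt {u : ℂ → ℂ} {z : ℂ} (hu : DifferentiableAt ℂ u z) :
    Dbar2 u z = 0 := by
  rw [dbar2_eq_of_hasFDerivAt (hu.hasFDerivAt.restrictScalars ℝ)]
  have : fderiv ℂ u z I = I * fderiv ℂ u z 1 := by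
    rw [← smul_eq_mul, ← map_smul, smul_eq_mul, mul_one]
  simp only [ContinuousLinearMap.coe_restrictScalars', this]
  linear_combination -I * fderiv ℂ u z 1 * I_sq

lemma hasFDerivAt_comp_conj_sub {G : ℂ → ℂ} {z₀ z : ℂ}
    (hG : DifferentiableAt ℂ G (conj (z - z₀))) :
    HasFDerivAt (fun y => G (conj (y - z₀)))
      (deriv G (conj (z - z₀)) • (conjCLE : ℂ →L[ℝ] ℂ)) z := by
  have hconj : HasFDerivAt (fun y => conj (y - z₀)) (conjCLE : ℂ →L[ℝ] ℂ) z :=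
    (conjCLE : ℂ →L[ℝ] ℂ).hasFDerivAt.comp z ((hasFDerivAt_id z).sub_const z₀)
  exact hG.hasDerivAt.comp_hasFDerivAt z hconj

lemma dbar2_comp_conj_sub {G : ℂ → ℂ} {z₀ z : ℂ} (hG : DifferentiableAt ℂ G (conj (z - z₀))) :
    Dbar2 (fun y => G (conj (y - z₀))) z = -2 * I * deriv G (conj (z - z₀)) := by
  rw [dbar2_eq_of_hasFDerivAt (hasFDerivAt_comp_conj_sub hG)]
  simp only [smul_apply, ContinuousLinearEquiv.coe_coe, conjCLE_apply, map_one, conj_I, smul_eq_mul]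
  linear_combination I * deriv G (conj (z - z₀)) * I_sq

lemma analyticAt_dbar2 {u : ℂ → ℂ} {z : ℂ} (hu : AnalyticAt ℝ u z) :
    AnalyticAt ℝ (Dbar2 u) z := by
  have analyticAt_fderiv (v : ℂ) : AnalyticAt ℝ (fun y => fderiv ℝ u y v) z :=
    ((ContinuousLinearMap.apply ℝ ℂ v).analyticAt _).comp hu.fderiv
  exact analyticAt_const.mul
    ((analyticAt_fderiv 1).add (analyticAt_const.mul (analyticAt_fderiv I)))

lemma contDiffAt_dbar2 {u : ℂ → ℂ} {z : ℂ} {m n : WithTop ℕ∞} (hu : ContDiffAt ℝ n u z)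
    (hmn : m + 1 ≤ n) : ContDiffAt ℝ m (Dbar2 u) z := by
  have contDiffAt_fderiv (v : ℂ) : ContDiffAt ℝ m (fun y => fderiv ℝ u y v) z :=
    (hu.fderiv_right hmn).clm_apply contDiffAt_const
  exact contDiffAt_const.mul
    ((contDiffAt_fderiv 1).add (contDiffAt_const.mul (contDiffAt_fderiv I)))

end Dbar

section Division

variable {f V G : ℂ → ℂ} {z₀ : ℂ}

lemma dbar2_eventuallyEq_of_eventuallyEq (hV : AnalyticAt ℝ V z₀) (hG : AnalyticAt ℂ G 0)
    (hf : f =ᶠ[𝓝 z₀] fun z => (z - z₀) * V z + G (conj (z - z₀))) :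
    Dbar2 f =ᶠ[𝓝 z₀] fun z => (z - z₀) * Dbar2 V z + -2 * I * deriv G (conj (z - z₀)) := by
  filter_upwards [dbar2_congr hf, hV.eventually_analyticAt,
    (tendsto_conj_sub z₀).eventually hG.eventually_analyticAt] with z hfz hVz hGz
  have hz : DifferentiableAt ℂ (fun y => y - z₀) z := by fun_prop
  have hzR : DifferentiableAt ℝ (fun y => y - z₀) z := by fun_prop
  rw [hfz, dbar2_add (hzR.fun_mul hVz.differentiableAt)
      (hasFDerivAt_comp_conj_sub hGz.differentiableAt).differentiableAt,
    dbar2_mul hzR hVz.differentiableAt, dbar2_eq_zero_of_differentiableAt hz,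
    dbar2_comp_conj_sub hGz.differentiableAt, zero_mul, zero_add]

lemma iterate_dbar2_eq_iteratedDeriv (hV : AnalyticAt ℝ V z₀) (hG : AnalyticAt ℂ G 0)
    (hf : f =ᶠ[𝓝 z₀] fun z => (z - z₀) * V z + G (conj (z - z₀))) (ℓ : ℕ) :
    (Dbar2^[ℓ] f) z₀ = (-2 * I) ^ ℓ * iteratedDeriv ℓ G 0 := by
  induction ℓ generalizing f V G with
  | zero => simpa using hf.self_of_nhds
  | succ ℓ ih =>
    rw [Function.iterate_succ_apply, ih (analyticAt_dbar2 hV) (analyticAt_const.fun_mul hG.deriv)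
      (dbar2_eventuallyEq_of_eventuallyEq hV hG hf), iteratedDeriv_const_mul_field,
      iteratedDeriv_succ']
    ring

lemma eventually_eq_zero_of_iteratedDeriv_eq_zero {𝕜 E : Type*} [NontriviallyNormedField 𝕜]
    [CharZero 𝕜] [NormedAddCommGroup E] [NormedSpace 𝕜 E] [CompleteSpace E] {g : 𝕜 → E} {x : 𝕜}
    (hg : AnalyticAt 𝕜 g x) (h : ∀ n, iteratedDeriv n g x = 0) : ∀ᶠ y in 𝓝 x, g y = 0 := by
  refine analyticOrderAt_eq_top.1 (ENat.eq_top_iff_forall_ge.2 fun n => ?_)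
  exact (natCast_le_analyticOrderAt_iff_iteratedDeriv_eq_zero hg).2 fun i _ => h i

lemma exists_realAnalytic_eq_sub_mul_of_eventuallyEq (hf : RealAnalytic f)
    (hV : AnalyticAt ℝ V z₀) (hfV : f =ᶠ[𝓝 z₀] fun z => (z - z₀) * V z) :
    ∃ g : ℂ → ℂ, RealAnalytic g ∧ ∀ z, f z = (z - z₀) * g z := by
  let g := Function.update (fun z => f z / (z - z₀)) z₀ (V z₀)
  have g_of_ne {z : ℂ} (hz : z ≠ z₀) : g z = f z / (z - z₀) := Function.update_of_ne hz _ _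
  have g_self : g z₀ = V z₀ := Function.update_self ..
  refine ⟨g, fun z => ?_, fun z => ?_⟩
  · rcases eq_or_ne z z₀ with rfl | hz
    · refine hV.congr ?_
      filter_upwards [hfV] with y hy
      rcases eq_or_ne y z with rfl | hyz
      · exact g_self.symm
      · rw [g_of_ne hyz, hy, mul_div_cancel_left₀ _ (sub_ne_zero.2 hyz)]
    · have hquot : AnalyticAt ℝ (fun y => f y / (y - z₀)) z :=
        (hf z).div (by fun_prop) (sub_ne_zero.2 hz)
      exact hquot.congr ((eventually_ne_nhds hz).mono fun y hy => (g_of_ne hy).symm)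
  · rcases eq_or_ne z z₀ with rfl | hz
    · simpa using hfV.self_of_nhds
    · rw [g_of_ne hz, mul_div_cancel₀ _ (sub_ne_zero.2 hz)]

theorem exists_realAnalytic_eq_sub_mul (hf : RealAnalytic f)
    (h : ∀ ℓ : ℕ, (Dbar2^[ℓ] f) z₀ = 0) :
    ∃ g : ℂ → ℂ, RealAnalytic g ∧ ∀ z, f z = (z - z₀) * g z := by
  obtain ⟨V, G, hV, hG, hfVG⟩ := exists_eventuallyEq_smul_add_comp_conj (hf z₀)
  have hG_deriv (ℓ : ℕ) : iteratedDeriv ℓ G 0 = 0 := by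
    have := (iterate_dbar2_eq_iteratedDeriv hV hG hfVG ℓ).symm.trans (h ℓ)
    simpa using this
  have hG_zero := eventually_eq_zero_of_iteratedDeriv_eq_zero hG hG_deriv
  refine exists_realAnalytic_eq_sub_mul_of_eventuallyEq hf hV ?_
  filter_upwards [hfVG, (tendsto_conj_sub z₀).eventually hG_zero] with z hz hGz
  rw [hz, hGz, add_zero, smul_eq_mul]

end Division

section System

variable {ι : Type*} [Fintype ι] {A : ι → ι → ℂ → ℂ} {w : ι → ℂ → ℂ} {z₀ : ℂ}

lemma dbar2_sum_mul_eventuallyEq {a : ι → ℂ → ℂ}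
    (ha : ∀ i, ∀ᶠ z in 𝓝 z₀, DifferentiableAt ℝ (a i) z)
    (hw : ∀ i, ∀ᶠ z in 𝓝 z₀, DifferentiableAt ℝ (w i) z)
    (hsys : ∀ i, ∀ᶠ z in 𝓝 z₀, Dbar2 (w i) z = ∑ j, A i j z * w j z) :
    Dbar2 (fun z => ∑ i, a i z * w i z) =ᶠ[𝓝 z₀]
      fun z => ∑ j, (Dbar2 (a j) z + ∑ i, a i z * A i j z) * w j z := by
  filter_upwards [eventually_all.2 ha, eventually_all.2 hw, eventually_all.2 hsys]
    with z haz hwz hsysz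
  calc Dbar2 (fun z => ∑ i, a i z * w i z) z
      = ∑ i, (Dbar2 (a i) z * w i z + a i z * ∑ j, A i j z * w j z) := by
        rw [dbar2_sum fun i _ => (haz i).fun_mul (hwz i)]
        exact Finset.sum_congr rfl fun i _ => by rw [dbar2_mul (haz i) (hwz i), hsysz]
    _ = ∑ j, (Dbar2 (a j) z + ∑ i, a i z * A i j z) * w j z := by
        simp only [Finset.sum_add_distrib, add_mul, Finset.mul_sum, Finset.sum_mul, mul_assoc]
        rw [Finset.sum_comm]

theorem iterate_dbar2_eq_zero_of_eventuallyEq_sum_mul (hA : ∀ i j, ContDiffAt ℝ ∞ (A i j) z₀)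
    (hw : ∀ i, ∀ᶠ z in 𝓝 z₀, DifferentiableAt ℝ (w i) z)
    (hsys : ∀ i, ∀ᶠ z in 𝓝 z₀, Dbar2 (w i) z = ∑ j, A i j z * w j z)
    (hz₀ : ∀ i, w i z₀ = 0) {a : ι → ℂ → ℂ} (ha : ∀ i, ContDiffAt ℝ ∞ (a i) z₀) {u : ℂ → ℂ}
    (hu : u =ᶠ[𝓝 z₀] fun z => ∑ i, a i z * w i z) (ℓ : ℕ) :
    (Dbar2^[ℓ] u) z₀ = 0 := by
  induction ℓ generalizing u a with
  | zero =>
    rw [Function.iterate_zero_apply, hu.self_of_nhds]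
    exact Finset.sum_eq_zero fun i _ => by rw [hz₀, mul_zero]
  | succ ℓ ih =>
    have ha_diff (i : ι) : ∀ᶠ z in 𝓝 z₀, DifferentiableAt ℝ (a i) z :=
      (((ha i).of_le (m := 1) (by simp)).eventually (by simp)).mono
        fun z hz => hz.differentiableAt one_ne_zero
    rw [Function.iterate_succ_apply]
    exact ih (fun j => (contDiffAt_dbar2 (ha j) le_rfl).add (.sum fun i _ => (ha i).mul (hA i j)))
      ((dbar2_congr hu).trans (dbar2_sum_mul_eventuallyEq ha_diff hw hsys))

end System

theorem stmt7_general {ι : Type*} [Fintype ι] {A : ι → ι → ℂ → ℂ} {w : ι → ℂ → ℂ} {z₀ : ℂ}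
    (hA : ∀ i j, ContDiffAt ℝ ∞ (A i j) z₀) (hw : ∀ i, RealAnalytic (w i))
    (hsys : ∀ i, ∀ᶠ z in 𝓝 z₀, Dbar2 (w i) z = ∑ j, A i j z * w j z)
    (hz₀ : ∀ i, w i z₀ = 0) :
    (∀ i, ∀ ℓ : ℕ, (Dbar2^[ℓ] (w i)) z₀ = 0) ∧
      ∃ v : ι → ℂ → ℂ, (∀ i, RealAnalytic (v i)) ∧ ∀ i z, w i z = (z - z₀) * v i z := by
  classical
  have hvanish (i : ι) (ℓ : ℕ) : (Dbar2^[ℓ] (w i)) z₀ = 0 := by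
    refine iterate_dbar2_eq_zero_of_eventuallyEq_sum_mul hA
      (fun j => .of_forall fun z => (hw j z).differentiableAt) hsys hz₀
      (a := fun j _ => if j = i then 1 else 0) (fun _ => contDiffAt_const) (.of_eq ?_) ℓ
    simp only [ite_mul, one_mul, zero_mul, Finset.sum_ite_eq', Finset.mem_univ, if_true]
  choose v hv hwv using fun i => exists_realAnalytic_eq_sub_mul (hw i) (hvanish i)
  exact ⟨hvanish, v, hv, hwv⟩

section Dirac

/-- The coefficient matrix `-(α U + k)`, with `U` off-diagonal with entries `U₊`, `U₋`, that puts
the equation `(D(α) + k) w = 0` in the form `2 D_{z̄} wᵢ = ∑ⱼ Aᵢⱼ wⱼ` treated by `stmt7_general`. -/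
def diracCoeff (Uplus Uminus : ℂ → ℂ) (α k : ℂ) : Fin 2 → Fin 2 → ℂ → ℂ :=
  ![![fun _ => -k, fun z => -(α * Uplus z)], ![fun z => -(α * Uminus z), fun _ => -k]]

variable {Uplus Uminus : ℂ → ℂ} {α k : ℂ}

lemma contDiffAt_diracCoeff {z₀ : ℂ} {n : WithTop ℕ∞} (hUp : ContDiffAt ℝ n Uplus z₀)
    (hUm : ContDiffAt ℝ n Uminus z₀) (i j : Fin 2) :
    ContDiffAt ℝ n (diracCoeff Uplus Uminus α k i j) z₀ := by
  fin_cases i <;> fin_cases j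
  exacts [contDiffAt_const, (contDiffAt_const.mul hUp).neg, (contDiffAt_const.mul hUm).neg,
    contDiffAt_const]

lemma dbar2_eq_sum_diracCoeff_mul {w₁ w₂ : ℂ → ℂ} {z : ℂ}
    (heq1 : Dbar2 w₁ z + α * Uplus z * w₂ z + k * w₁ z = 0)
    (heq2 : α * Uminus z * w₁ z + Dbar2 w₂ z + k * w₂ z = 0) (i : Fin 2) :
    Dbar2 (![w₁, w₂] i) z = ∑ j, diracCoeff Uplus Uminus α k i j z * ![w₁, w₂] j z := by
  rw [Fin.sum_univ_two]
  fin_cases i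
  · change Dbar2 w₁ z = -k * w₁ z + -(α * Uplus z) * w₂ z
    linear_combination heq1
  · change Dbar2 w₂ z = -(α * Uminus z) * w₁ z + -k * w₂ z
    linear_combination heq2

end Dirac

theorem stmt7 (Uplus Uminus : ℂ → ℂ) (hUp : RealAnalytic Uplus) (hUm : RealAnalytic Uminus)
    (α k : ℂ) (w₁ w₂ : ℂ → ℂ) (hw₁ : RealAnalytic w₁) (hw₂ : RealAnalytic w₂)
    (heq1 : ∀ z : ℂ, Dbar2 w₁ z + α * Uplus z * w₂ z + k * w₁ z = 0)
    (heq2 : ∀ z : ℂ, α * Uminus z * w₁ z + Dbar2 w₂ z + k * w₂ z = 0)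
    (z₀ : ℂ) (hz₀ : w₁ z₀ = 0 ∧ w₂ z₀ = 0) :
    (∀ ℓ : ℕ, (Dbar2^[ℓ] w₁) z₀ = 0 ∧ (Dbar2^[ℓ] w₂) z₀ = 0) ∧
    ∃ w₀₁ w₀₂ : ℂ → ℂ, RealAnalytic w₀₁ ∧ RealAnalytic w₀₂ ∧
      ∀ z : ℂ, w₁ z = (z - z₀) * w₀₁ z ∧ w₂ z = (z - z₀) * w₀₂ z := by
  obtain ⟨hvanish, v, hv, hwv⟩ := stmt7_general
    (contDiffAt_diracCoeff (hUp z₀).contDiffAt (hUm z₀).contDiffAt)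
    (Fin.forall_fin_two.2 ⟨hw₁, hw₂⟩)
    (fun i => .of_forall fun z => dbar2_eq_sum_diracCoeff_mul (heq1 z) (heq2 z) i)
    (Fin.forall_fin_two.2 hz₀)
  exact ⟨fun ℓ => ⟨hvanish 0 ℓ, hvanish 1 ℓ⟩, v 0, v 1, hv 0, hv 1, fun z => ⟨hwv 0 z, hwv 1 z⟩⟩

end
end
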